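/- arXiv:1912.00591 — 3 statements merged into one kernel-verified Lean document; each statement's English description precedes it below -/
import Mathlib

section
/- Let E, H : ℝ × ℝ³ → Matrix (Fin 3) (Fin 3) ℝ be smooth matrix-valued fields that are pointwise symmetric, trace-free, and spatially divergence-free (Σ_b ∂_b E_{ab} = 0 = Σ_b ∂_b H_{ab}), and suppose they satisfy the linearized Bianchi evolution system ∂ₜE_{ab} = (curl H)_{ab} and ∂ₜH_{ab} = −(curl E)_{ab}, with the tensor curl taken in the spatial variables. Then every component of E satisfies the wave equation ∂ₜ²E_{ab} = ΔE_{ab}, where Δ = Σ_c ∂_c². (This is the flat-space, non-expanding form □E_{ab} = 0 of the gravitational wave equation for the electric Weyl tensor.) -/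
/-- Time partial derivative of a scalar field on `ℝ × ℝ³`. -/
noncomputable def pt (f : ℝ × (Fin 3 → ℝ) → ℝ) (p : ℝ × (Fin 3 → ℝ)) : ℝ :=
  deriv (fun s => f (s, p.2)) p.1

/-- Spatial partial derivative `∂_i` of a scalar field on `ℝ × ℝ³`. -/
noncomputable def ps (i : Fin 3) (f : ℝ × (Fin 3 → ℝ) → ℝ) (p : ℝ × (Fin 3 → ℝ)) : ℝ :=
  deriv (fun s => f (p.1, Function.update p.2 i s)) (p.2 i)

/-- Levi-Civita symbol on three indices. -/
noncomputable def eps (a b c : Fin 3) : ℝ :=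
  (((b : ℕ) : ℝ) - ((a : ℕ) : ℝ)) * (((c : ℕ) : ℝ) - ((b : ℕ) : ℝ))
    * (((c : ℕ) : ℝ) - ((a : ℕ) : ℝ)) / 2

/-- Symmetrized spatial tensor curl of a matrix-valued field on `ℝ × ℝ³`:
`(curl S)_{ab} = ½ Σ_{c,d} ( ε_{acd} ∂_c S_{db} + ε_{bcd} ∂_c S_{da} )`. -/
noncomputable def curlT (S : ℝ × (Fin 3 → ℝ) → Matrix (Fin 3) (Fin 3) ℝ)
    (p : ℝ × (Fin 3 → ℝ)) : Matrix (Fin 3) (Fin 3) ℝ :=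
  Matrix.of fun a b =>
    (1 / 2) * ∑ c, ∑ d,
      (eps a c d * ps c (fun q => S q d b) p + eps b c d * ps c (fun q => S q d a) p)


/-- Directional derivative along a constant vector. -/
noncomputable def dirD (v : ℝ × (Fin 3 → ℝ)) (f : ℝ × (Fin 3 → ℝ) → ℝ)
    (p : ℝ × (Fin 3 → ℝ)) : ℝ := fderiv ℝ f p v

lemma pt_eq_dirD {f : ℝ × (Fin 3 → ℝ) → ℝ} (hf : ContDiff ℝ (⊤ : ℕ∞) f) :
    pt f = dirD (1, 0) f := by
  funext p
  have h1 : HasDerivAt (fun s : ℝ => (s, p.2)) ((1 : ℝ), (0 : Fin 3 → ℝ)) p.1 :=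
    (hasDerivAt_id p.1).prodMk (hasDerivAt_const p.1 p.2)
  have h2 : HasFDerivAt f (fderiv ℝ f p) ((fun s : ℝ => (s, p.2)) p.1) :=
    (hf.differentiable (by simp) p).hasFDerivAt
  exact (h2.comp_hasDerivAt p.1 h1).deriv

lemma ps_eq_dirD (i : Fin 3) {f : ℝ × (Fin 3 → ℝ) → ℝ} (hf : ContDiff ℝ (⊤ : ℕ∞) f) :
    ps i f = dirD (0, Pi.single i 1) f := by
  funext p
  have h1 : HasDerivAt (fun s : ℝ => (p.1, Function.update p.2 i s))
      ((0 : ℝ), (Pi.single i 1 : Fin 3 → ℝ)) (p.2 i) :=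
    (hasDerivAt_const (p.2 i) p.1).prodMk (hasDerivAt_update p.2 i (p.2 i))
  have h2 : HasFDerivAt f (fderiv ℝ f p)
      ((fun s : ℝ => (p.1, Function.update p.2 i s)) (p.2 i)) := by
    simpa using (hf.differentiable (by simp) p).hasFDerivAt
  exact (h2.comp_hasDerivAt (p.2 i) h1).deriv

lemma dirD_smooth (v : ℝ × (Fin 3 → ℝ)) {f : ℝ × (Fin 3 → ℝ) → ℝ}
    (hf : ContDiff ℝ (⊤ : ℕ∞) f) : ContDiff ℝ (⊤ : ℕ∞) (dirD v f) := by
  have h : ContDiff ℝ (⊤ : ℕ∞) (fderiv ℝ f) := hf.fderiv_right (by simp)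
  exact h.clm_apply contDiff_const

lemma dirD_comm (v w : ℝ × (Fin 3 → ℝ)) {f : ℝ × (Fin 3 → ℝ) → ℝ}
    (hf : ContDiff ℝ (⊤ : ℕ∞) f) : dirD v (dirD w f) = dirD w (dirD v f) := by
  funext p
  have h : ContDiff ℝ (⊤ : ℕ∞) (fderiv ℝ f) := hf.fderiv_right (by simp)
  have hd : DifferentiableAt ℝ (fderiv ℝ f) p := h.differentiable (by simp) p
  have key : ∀ v w : ℝ × (Fin 3 → ℝ),
      dirD v (dirD w f) p = fderiv ℝ (fderiv ℝ f) p v w := by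
    intro v w
    have := hd.hasFDerivAt.clm_apply (hasFDerivAt_const w p)
    show fderiv ℝ (fun q => fderiv ℝ f q w) p v = _
    rw [this.fderiv]
    simp
  rw [key, key]
  have hs : IsSymmSndFDerivAt ℝ f p := hf.contDiffAt.isSymmSndFDerivAt (by
    simp only [minSmoothness_of_isRCLikeNormedField]
    exact WithTop.coe_le_coe.2 (le_top : (2 : ℕ∞) ≤ ⊤))
  exact hs v w

lemma dirD_neg (v : ℝ × (Fin 3 → ℝ)) (f : ℝ × (Fin 3 → ℝ) → ℝ) (p : ℝ × (Fin 3 → ℝ)) :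
    dirD v (fun q => - f q) p = - dirD v f p := by
  simp [dirD, fderiv_fun_neg]

lemma dirD_add (v : ℝ × (Fin 3 → ℝ)) {f g : ℝ × (Fin 3 → ℝ) → ℝ}
    (hf : ContDiff ℝ (⊤ : ℕ∞) f) (hg : ContDiff ℝ (⊤ : ℕ∞) g) (p : ℝ × (Fin 3 → ℝ)) :
    dirD v (fun q => f q + g q) p = dirD v f p + dirD v g p := by
  simp [dirD, fderiv_fun_add (hf.differentiable (by simp) p) (hg.differentiable (by simp) p)]

lemma dirD_mul (v : ℝ × (Fin 3 → ℝ)) (k : ℝ) {f : ℝ × (Fin 3 → ℝ) → ℝ}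
    (hf : ContDiff ℝ (⊤ : ℕ∞) f) (p : ℝ × (Fin 3 → ℝ)) :
    dirD v (fun q => k * f q) p = k * dirD v f p := by
  simp [dirD, fderiv_const_mul (hf.differentiable (by simp) p)]

lemma dirD_sum (v : ℝ × (Fin 3 → ℝ)) {f : Fin 3 → ℝ × (Fin 3 → ℝ) → ℝ}
    (hf : ∀ i, ContDiff ℝ (⊤ : ℕ∞) (f i)) (p : ℝ × (Fin 3 → ℝ)) :
    dirD v (fun q => ∑ i, f i q) p = ∑ i, dirD v (f i) p := by
  simp [dirD, fderiv_fun_sum (fun i _ => (hf i).differentiable (by simp) p)]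

lemma dirD_curl (v : ℝ × (Fin 3 → ℝ)) (S : ℝ × (Fin 3 → ℝ) → Matrix (Fin 3) (Fin 3) ℝ)
    (hS : ∀ a b, ContDiff ℝ (⊤ : ℕ∞) (fun p => S p a b)) (p : ℝ × (Fin 3 → ℝ)) (a b : Fin 3) :
    dirD v (fun q => curlT S q a b) p = (1 / 2) * ∑ c, ∑ d,
      (eps a c d * dirD (0, Pi.single c 1) (dirD v (fun q => S q d b)) p
        + eps b c d * dirD (0, Pi.single c 1) (dirD v (fun q => S q d a)) p) := by
  have hD : ∀ c d b, ContDiff ℝ (⊤ : ℕ∞) (dirD (0, Pi.single c 1) (fun q => S q d b)) :=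
    fun c d b => dirD_smooth _ (hS d b)
  have h1 : ∀ a b c d, ContDiff ℝ (⊤ : ℕ∞)
      (fun q => eps a c d * dirD (0, Pi.single c 1) (fun q => S q d b) q) :=
    fun a b c d => contDiff_const.mul (hD c d b)
  have h2 : ∀ c d, ContDiff ℝ (⊤ : ℕ∞)
      (fun q => eps a c d * dirD (0, Pi.single c 1) (fun q => S q d b) q
        + eps b c d * dirD (0, Pi.single c 1) (fun q => S q d a) q) :=
    fun c d => (h1 a b c d).add (h1 b a c d)
  have h3 : ∀ c, ContDiff ℝ (⊤ : ℕ∞)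
      (fun q => ∑ d, (eps a c d * dirD (0, Pi.single c 1) (fun q => S q d b) q
        + eps b c d * dirD (0, Pi.single c 1) (fun q => S q d a) q)) :=
    fun c => ContDiff.sum fun d _ => h2 c d
  have e : (fun q => curlT S q a b) = fun q => (1 / 2) * ∑ c, ∑ d,
      (eps a c d * dirD (0, Pi.single c 1) (fun q => S q d b) q
        + eps b c d * dirD (0, Pi.single c 1) (fun q => S q d a) q) := by
    funext q
    simp only [curlT, Matrix.of_apply, ps_eq_dirD _ (hS _ _)]
  rw [e, dirD_mul v _ (ContDiff.sum fun c _ => h3 c), dirD_sum v h3]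
  congr 1
  refine Finset.sum_congr rfl fun c _ => ?_
  rw [dirD_sum v (h2 c)]
  refine Finset.sum_congr rfl fun d _ => ?_
  rw [dirD_add v (h1 a b c d) (h1 b a c d), dirD_mul v _ (hD c d b), dirD_mul v _ (hD c d a),
    dirD_comm v _ (hS d b), dirD_comm v _ (hS d a)]

lemma dirD_zero (v : ℝ × (Fin 3 → ℝ)) (p : ℝ × (Fin 3 → ℝ)) :
    dirD v (fun _ => 0) p = 0 := by
  simp [dirD]

set_option maxHeartbeats 2000000 in
lemma curl_curl_alg (X : Fin 3 → Fin 3 → Fin 3 → Fin 3 → ℝ)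
    (hc : ∀ c e a b, X c e a b = X e c a b)
    (hs : ∀ c e a b, X c e a b = X c e b a)
    (ht : ∀ c e, ∑ a, X c e a a = 0)
    (hd : ∀ c a, ∑ b, X c b a b = 0) (a b : Fin 3) :
    (1 / 2) * ∑ c, ∑ d,
      (eps a c d * -((1 / 2) * ∑ e, ∑ f, (eps d e f * X e c f b + eps b e f * X e c f d))
      + eps b c d * -((1 / 2) * ∑ e, ∑ f, (eps d e f * X e c f a + eps a e f * X e c f d)))
      = ∑ c, X c c a b := by
  simp only [Fin.sum_univ_three] at ht hd ⊢
  have c1 := hc 1 0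
  have c2 := hc 2 0
  have c3 := hc 2 1
  have s1 := fun c e => hs c e 1 0
  have s2 := fun c e => hs c e 2 0
  have s3 := fun c e => hs c e 2 1
  have t00 := ht 0 0
  have t01 := ht 0 1
  have t02 := ht 0 2
  have t11 := ht 1 1
  have t12 := ht 1 2
  have t22 := ht 2 2
  have d00 := hd 0 0
  have d01 := hd 0 1
  have d02 := hd 0 2
  have d10 := hd 1 0
  have d11 := hd 1 1
  have d12 := hd 1 2
  have d20 := hd 2 0
  have d21 := hd 2 1
  have d22 := hd 2 2
  fin_cases a <;> fin_cases b <;>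
    simp only [eps, Fin.zero_eta, Fin.mk_one, Fin.reduceFinMk, Fin.isValue, Fin.val_zero,
      Fin.val_one, Fin.val_two, c1, c2, c3, s1, s2, s3] at * <;> norm_num <;> linarith

/-- Linearized Bianchi system for the electric and magnetic Weyl tensors about flat
spacetime: if symmetric trace-free spatially divergence-free smooth `E, H` satisfy
`∂ₜE = curl H` and `∂ₜH = −curl E`, then each component of `E` satisfies the
unit-speed wave equation `∂ₜ²E_{ab} = ΔE_{ab}` (the flat-space form `□E_{ab} = 0`). -/
theorem electric_weyl_wave_equation
    (E H : ℝ × (Fin 3 → ℝ) → Matrix (Fin 3) (Fin 3) ℝ)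
    (hEsmooth : ∀ a b, ContDiff ℝ (⊤ : ℕ∞) (fun p => E p a b))
    (hHsmooth : ∀ a b, ContDiff ℝ (⊤ : ℕ∞) (fun p => H p a b))
    (hEsymm : ∀ p a b, E p a b = E p b a)
    (hHsymm : ∀ p a b, H p a b = H p b a)
    (hEtrace : ∀ p, (∑ a, E p a a) = 0)
    (hHtrace : ∀ p, (∑ a, H p a a) = 0)
    (hEdiv : ∀ p a, (∑ b, ps b (fun q => E q a b) p) = 0)
    (hHdiv : ∀ p a, (∑ b, ps b (fun q => H q a b) p) = 0)
    (hdotE : ∀ p a b, pt (fun q => E q a b) p = curlT H p a b)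
    (hdotH : ∀ p a b, pt (fun q => H q a b) p = - curlT E p a b) :
    ∀ p a b, pt (pt (fun q => E q a b)) p = ∑ c, ps c (ps c (fun q => E q a b)) p := by
  have hpt : ∀ a b, dirD (1, 0) (fun q => E q a b) = fun q => curlT H q a b := by
    intro a b
    rw [← pt_eq_dirD (hEsmooth a b)]
    funext q
    exact hdotE q a b
  have hptH : ∀ a b, dirD (1, 0) (fun q => H q a b) = fun q => - curlT E q a b := by
    intro a b
    rw [← pt_eq_dirD (hHsmooth a b)]
    funext q
    exact hdotH q a b
  intro p a b
  rw [pt_eq_dirD (hEsmooth a b), pt_eq_dirD (dirD_smooth _ (hEsmooth a b)), hpt,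
    dirD_curl _ H hHsmooth]
  simp only [hptH, dirD_neg]
  simp only [dirD_curl _ E hEsmooth]
  have hps : ∀ c, ps c (ps c (fun q => E q a b)) p
      = dirD (0, Pi.single c 1) (dirD (0, Pi.single c 1) (fun q => E q a b)) p := by
    intro c
    rw [ps_eq_dirD c (hEsmooth a b), ps_eq_dirD c (dirD_smooth _ (hEsmooth a b))]
  simp only [hps]
  refine curl_curl_alg (fun c e a b =>
    dirD (0, Pi.single c 1) (dirD (0, Pi.single e 1) (fun q => E q a b)) p) ?_ ?_ ?_ ?_ a b
  · intro c e a b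
    exact congrFun (dirD_comm _ _ (hEsmooth a b)) p
  · intro c e a b
    have : (fun q => E q a b) = fun q => E q b a := funext fun q => hEsymm q a b
    simp only [this]
  · intro c e
    have h : dirD (0, Pi.single c 1) (fun q => dirD (0, Pi.single e 1)
        (fun q => ∑ a, E q a a) q) p = 0 := by
      simp only [hEtrace, dirD_zero]
    simp only [dirD_sum _ (fun a => hEsmooth a a)] at h
    rwa [dirD_sum _ (fun a => dirD_smooth _ (hEsmooth a a))] at h
  · intro c a
    have h : dirD (0, Pi.single c 1) (fun q => ∑ b, ps b (fun q => E q a b) q) p = 0 := by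
      simp only [hEdiv, dirD_zero]
    simp only [ps_eq_dirD _ (hEsmooth _ _)] at h
    rwa [dirD_sum _ (fun b => dirD_smooth _ (hEsmooth a b))] at h
end

section
/- Let E, H : ℝ × ℝ³ → Matrix (Fin 3) (Fin 3) ℝ be smooth matrix-valued fields that are pointwise symmetric, trace-free, and spatially divergence-free (Σ_b ∂_b E_{ab} = 0 = Σ_b ∂_b H_{ab}), and suppose ∂ₜE_{ab} = (curl H)_{ab} and ∂ₜH_{ab} = −(curl E)_{ab}, with the tensor curl taken in the spatial variables. Then every component of H satisfies the wave equation ∂ₜ²H_{ab} = ΔH_{ab}, where Δ = Σ_c ∂_c². -/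
abbrev SpT := ℝ × (Fin 3 → ℝ)

lemma aux_pt_eq {f : SpT → ℝ} (hf : ContDiff ℝ (⊤ : ℕ∞) f) :
    pt f = fun p => fderiv ℝ f p (1, 0) := by
  funext p
  have hd : DifferentiableAt ℝ f (p.1, p.2) := (hf.differentiable (by simp)) _
  have hc : HasDerivAt (fun s : ℝ => (s, p.2)) ((1 : ℝ), (0 : Fin 3 → ℝ)) p.1 :=
    (hasDerivAt_id p.1).prodMk (hasDerivAt_const _ _)
  exact (hd.hasFDerivAt.comp_hasDerivAt p.1 hc).deriv

lemma aux_ps_eq (i : Fin 3) {f : SpT → ℝ} (hf : ContDiff ℝ (⊤ : ℕ∞) f) :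
    ps i f = fun p => fderiv ℝ f p (0, Pi.single i 1) := by
  funext p
  have hd : DifferentiableAt ℝ f (p.1, Function.update p.2 i (p.2 i)) :=
    (hf.differentiable (by simp)) _
  have hc : HasDerivAt (fun s : ℝ => (p.1, Function.update p.2 i s))
      ((0 : ℝ), (Pi.single i 1 : Fin 3 → ℝ)) (p.2 i) :=
    (hasDerivAt_const _ _).prodMk (hasDerivAt_update p.2 i (p.2 i))
  have h := (hd.hasFDerivAt.comp_hasDerivAt (p.2 i) hc).deriv
  rw [Function.update_eq_self] at h
  exact h

lemma aux_smooth_D {f : SpT → ℝ} (hf : ContDiff ℝ (⊤ : ℕ∞) f) (v : SpT) :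
    ContDiff ℝ (⊤ : ℕ∞) (fun p => fderiv ℝ f p v) :=
  (hf.fderiv_right (m := (⊤ : ℕ∞)) (by simp)).clm_apply contDiff_const

lemma aux_smooth_ps (i : Fin 3) {f : SpT → ℝ} (hf : ContDiff ℝ (⊤ : ℕ∞) f) :
    ContDiff ℝ (⊤ : ℕ∞) (ps i f) := by
  rw [aux_ps_eq i hf]; exact aux_smooth_D hf _

lemma aux_smooth_pt {f : SpT → ℝ} (hf : ContDiff ℝ (⊤ : ℕ∞) f) :
    ContDiff ℝ (⊤ : ℕ∞) (pt f) := by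
  rw [aux_pt_eq hf]; exact aux_smooth_D hf _

lemma aux_comm {f : SpT → ℝ} (hf : ContDiff ℝ (⊤ : ℕ∞) f) (v w p : SpT) :
    fderiv ℝ (fun q => fderiv ℝ f q v) p w = fderiv ℝ (fun q => fderiv ℝ f q w) p v := by
  have hd : DifferentiableAt ℝ (fderiv ℝ f) p :=
    ((hf.fderiv_right (m := (⊤ : ℕ∞)) (by simp)).differentiable (by simp)) p
  have hs : IsSymmSndFDerivAt ℝ f p :=
    hf.contDiffAt.isSymmSndFDerivAt (by
      simp only [minSmoothness_of_isRCLikeNormedField]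
      exact WithTop.coe_le_coe.2 (le_top : (2 : ℕ∞) ≤ ⊤))
  have key : ∀ u, fderiv ℝ (fun q => fderiv ℝ f q u) p
      = (fderiv ℝ (fderiv ℝ f) p).flip u := by
    intro u
    rw [fderiv_clm_apply hd (differentiableAt_const u)]
    simp
  rw [key, key]
  exact hs w v

lemma aux_ps_comm (i j : Fin 3) {f : SpT → ℝ} (hf : ContDiff ℝ (⊤ : ℕ∞) f) (p : SpT) :
    ps i (ps j f) p = ps j (ps i f) p := by
  rw [aux_ps_eq i (aux_smooth_ps j hf), aux_ps_eq j (aux_smooth_ps i hf),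
    aux_ps_eq i hf, aux_ps_eq j hf]
  exact aux_comm hf _ _ p

lemma aux_pt_ps_comm (i : Fin 3) {f : SpT → ℝ} (hf : ContDiff ℝ (⊤ : ℕ∞) f) (p : SpT) :
    pt (ps i f) p = ps i (pt f) p := by
  rw [aux_pt_eq (aux_smooth_ps i hf), aux_ps_eq i (aux_smooth_pt hf),
    aux_ps_eq i hf, aux_pt_eq hf]
  exact aux_comm hf _ _ p

lemma aux_D_sum {ι : Type} [Fintype ι] (k : ι → ℝ) (f : ι → SpT → ℝ)
    (hf : ∀ i, ContDiff ℝ (⊤ : ℕ∞) (f i)) (p : SpT) :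
    fderiv ℝ (fun q => ∑ i, k i * f i q) p = ∑ i, k i • fderiv ℝ (f i) p := by
  have hd : ∀ i, DifferentiableAt ℝ (f i) p := fun i => ((hf i).differentiable (by simp)) p
  rw [fderiv_fun_sum (fun i _ => (hd i).const_mul (k i))]
  exact Finset.sum_congr rfl fun i _ => fderiv_const_mul (hd i) (k i)

lemma aux_smooth_sum {ι : Type} [Fintype ι] (k : ι → ℝ) (f : ι → SpT → ℝ)
    (hf : ∀ i, ContDiff ℝ (⊤ : ℕ∞) (f i)) :
    ContDiff ℝ (⊤ : ℕ∞) (fun q => ∑ i, k i * f i q) :=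
  ContDiff.sum fun i _ => contDiff_const.mul (hf i)

lemma aux_pt_sum {ι : Type} [Fintype ι] (k : ι → ℝ) (f : ι → SpT → ℝ)
    (hf : ∀ i, ContDiff ℝ (⊤ : ℕ∞) (f i)) (p : SpT) :
    pt (fun q => ∑ i, k i * f i q) p = ∑ i, k i * pt (f i) p := by
  rw [aux_pt_eq (aux_smooth_sum k f hf)]
  simp only [aux_D_sum k f hf, fun i => aux_pt_eq (hf i)]
  simp

lemma aux_ps_sum {ι : Type} [Fintype ι] (j : Fin 3) (k : ι → ℝ) (f : ι → SpT → ℝ)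
    (hf : ∀ i, ContDiff ℝ (⊤ : ℕ∞) (f i)) (p : SpT) :
    ps j (fun q => ∑ i, k i * f i q) p = ∑ i, k i * ps j (f i) p := by
  rw [aux_ps_eq j (aux_smooth_sum k f hf)]
  simp only [aux_D_sum k f hf, fun i => aux_ps_eq j (hf i)]
  simp

/-- The curl as one linear combination. -/
lemma aux_curl (S : SpT → Matrix (Fin 3) (Fin 3) ℝ) (p : SpT) (a b : Fin 3) :
    curlT S p a b = ∑ i : Fin 3 × Fin 3 × Bool,
      (1 / 2 * eps (if i.2.2 then a else b) i.1 i.2.1) *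
        ps i.1 (fun q => S q i.2.1 (if i.2.2 then b else a)) p := by
  simp only [curlT, Matrix.of_apply, Fintype.sum_prod_type, Fintype.sum_bool, Finset.mul_sum]
  refine Finset.sum_congr rfl fun c _ => Finset.sum_congr rfl fun d _ => ?_
  simp only [if_true, Bool.false_eq_true, if_false]
  ring

lemma aux_alg (T : Fin 3 → Fin 3 → Fin 3 → Fin 3 → ℝ)
    (h1 : ∀ c e a b, T c e a b = T e c a b) (h2 : ∀ c e a b, T c e a b = T c e b a)
    (h3 : ∀ c e, ∑ a, T c e a a = 0) (h4 : ∀ c a, ∑ b, T c b a b = 0) (a b : Fin 3) :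
    -(1 / 2 * ∑ c, ∑ d,
      (eps a c d * (1 / 2 * ∑ e, ∑ f, (eps d e f * T c e f b + eps b e f * T c e f d))
      + eps b c d * (1 / 2 * ∑ e, ∑ f, (eps d e f * T c e f a + eps a e f * T c e f d))))
    = ∑ c, T c c a b := by
  have s1 : ∀ a b, T 1 0 a b = T 0 1 a b := fun a b => h1 _ _ _ _
  have s2 : ∀ a b, T 2 0 a b = T 0 2 a b := fun a b => h1 _ _ _ _
  have s3 : ∀ a b, T 2 1 a b = T 1 2 a b := fun a b => h1 _ _ _ _
  have r1 : ∀ a b, T a b 1 0 = T a b 0 1 := fun a b => h2 _ _ _ _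
  have r2 : ∀ a b, T a b 2 0 = T a b 0 2 := fun a b => h2 _ _ _ _
  have r3 : ∀ a b, T a b 2 1 = T a b 1 2 := fun a b => h2 _ _ _ _
  have t00 := h3 0 0
  have t01 := h3 0 1
  have t02 := h3 0 2
  have t11 := h3 1 1
  have t12 := h3 1 2
  have t22 := h3 2 2
  have d00 := h4 0 0
  have d01 := h4 0 1
  have d02 := h4 0 2
  have d10 := h4 1 0
  have d11 := h4 1 1
  have d12 := h4 1 2
  have d20 := h4 2 0
  have d21 := h4 2 1
  have d22 := h4 2 2
  clear h1 h2 h3 h4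
  simp only [Fin.sum_univ_three, s1, s2, s3, r1, r2, r3] at t00 t01 t02 t11 t12 t22 d00 d01 d02 d10 d11 d12 d20 d21 d22 ⊢
  have hcase : ∀ x : Fin 3, x = 0 ∨ x = 1 ∨ x = 2 := by decide
  rcases hcase a with rfl | rfl | rfl <;> rcases hcase b with rfl | rfl | rfl <;>
    norm_num [eps, s1, s2, s3, r1, r2, r3] <;> linarith

/-- Linearized Bianchi system for the electric and magnetic Weyl tensors about flat
spacetime: if symmetric trace-free spatially divergence-free smooth `E, H` satisfy
`∂ₜE = curl H` and `∂ₜH = −curl E`, then each component of `H` satisfies the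
unit-speed wave equation `∂ₜ²H_{ab} = ΔH_{ab}`. -/
theorem magnetic_weyl_wave_equation
    (E H : ℝ × (Fin 3 → ℝ) → Matrix (Fin 3) (Fin 3) ℝ)
    (hEsmooth : ∀ a b, ContDiff ℝ (⊤ : ℕ∞) (fun p => E p a b))
    (hHsmooth : ∀ a b, ContDiff ℝ (⊤ : ℕ∞) (fun p => H p a b))
    (hEsymm : ∀ p a b, E p a b = E p b a)
    (hHsymm : ∀ p a b, H p a b = H p b a)
    (hEtrace : ∀ p, (∑ a, E p a a) = 0)
    (hHtrace : ∀ p, (∑ a, H p a a) = 0)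
    (hEdiv : ∀ p a, (∑ b, ps b (fun q => E q a b) p) = 0)
    (hHdiv : ∀ p a, (∑ b, ps b (fun q => H q a b) p) = 0)
    (hdotE : ∀ p a b, pt (fun q => E q a b) p = curlT H p a b)
    (hdotH : ∀ p a b, pt (fun q => H q a b) p = - curlT E p a b) :
    ∀ p a b, pt (pt (fun q => H q a b)) p = ∑ c, ps c (ps c (fun q => H q a b)) p := by
  have hcE : ∀ a b, (fun q => E q a b) = fun q => E q b a := fun a b => funext fun q => hEsymm q a b
  have hcH : ∀ a b, (fun q => H q a b) = fun q => H q b a := fun a b => funext fun q => hHsymm q a b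
  -- the second time derivative in terms of second space derivatives
  have hE' : ∀ a b, pt (fun q => E q a b) = fun q => ∑ i : Fin 3 × Fin 3 × Bool,
      (1 / 2 * eps (if i.2.2 then a else b) i.1 i.2.1) *
        ps i.1 (fun q => H q i.2.1 (if i.2.2 then b else a)) q := by
    intro a b; funext q; rw [hdotE, aux_curl]
  have hH' : ∀ a b, pt (fun q => H q a b) = fun q => ∑ i : Fin 3 × Fin 3 × Bool,
      (-(1 / 2 * eps (if i.2.2 then a else b) i.1 i.2.1)) *
        ps i.1 (fun q => E q i.2.1 (if i.2.2 then b else a)) q := by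
    intro a b; funext q; rw [hdotH, aux_curl]; simp only [neg_mul, Finset.sum_neg_distrib]
  have hpsE : ∀ c a b p, ps c (pt (fun q => E q a b)) p =
      1 / 2 * ∑ e, ∑ f, (eps a e f * ps c (ps e (fun q => H q f b)) p
        + eps b e f * ps c (ps e (fun q => H q f a)) p) := by
    intro c a b p
    rw [hE', aux_ps_sum c _ _ (fun i => aux_smooth_ps _ (hHsmooth _ _))]
    simp only [Fintype.sum_prod_type, Fintype.sum_bool, Finset.mul_sum]
    refine Finset.sum_congr rfl fun c _ => Finset.sum_congr rfl fun d _ => ?_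
    simp only [if_true, Bool.false_eq_true, if_false]
    ring
  intro p a b
  have hz : ∀ c, ps c (fun _ => (0 : ℝ)) p = 0 := by intro c; simp [ps]
  rw [hH', aux_pt_sum _ _ (fun i => aux_smooth_ps _ (hEsmooth _ _))]
  simp only [fun c d b => aux_pt_ps_comm c (hEsmooth d b) p, hpsE]
  rw [← aux_alg (fun c e a b => ps c (ps e (fun q => H q a b)) p)]
  · simp only [Fintype.sum_prod_type, Fintype.sum_bool, if_true, Bool.false_eq_true, if_false]
    rw [Finset.mul_sum, ← Finset.sum_neg_distrib]
    refine Finset.sum_congr rfl fun c _ => ?_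
    rw [Finset.mul_sum, ← Finset.sum_neg_distrib]
    refine Finset.sum_congr rfl fun d _ => ?_
    ring
  · intro c e a b; exact aux_ps_comm c e (hHsmooth a b) p
  · intro c e a b; simp only [hcH a b]
  · intro c e
    have h0 : (fun q => ∑ a, (1 : ℝ) * H q a a) = fun _ => 0 := by
      funext q; simpa using hHtrace q
    have h1 : ∀ q, ps e (fun q => ∑ a, (1 : ℝ) * H q a a) q = ∑ a, 1 * ps e (fun q => H q a a) q :=
      fun q => aux_ps_sum e _ (fun a q => H q a a) (fun a => hHsmooth a a) q
    have h2 := aux_ps_sum c (fun _ : Fin 3 => (1 : ℝ)) (fun a => ps e (fun q => H q a a))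
      (fun a => aux_smooth_ps e (hHsmooth a a)) p
    rw [← funext h1, h0] at h2
    simp only [one_mul] at h2
    rw [← h2]
    simp [ps]
  · intro c a
    have h2 := aux_ps_sum c (fun _ : Fin 3 => (1 : ℝ)) (fun b => ps b (fun q => H q a b))
      (fun b => aux_smooth_ps b (hHsmooth a b)) p
    simp only [one_mul, hHdiv] at h2
    rw [← h2, hz]
end

section
/- (Propagation of the divergence constraints.) Let E, H : ℝ × ℝ³ → Matrix (Fin 3) (Fin 3) ℝ be smooth, pointwise symmetric matrix-valued fields satisfying ∂ₜE_{ab} = (curl H)_{ab} and ∂ₜH_{ab} = −(curl E)_{ab}, with the tensor curl taken in the spatial variables. Then the spatial divergences satisfy the coupled first-order system ∂ₜ( Σ_b ∂_b E_{ab} ) = ½ Σ_{c,d} ε_{acd} ∂_c ( Σ_b ∂_b H_{db} ) and ∂ₜ( Σ_b ∂_b H_{ab} ) = −½ Σ_{c,d} ε_{acd} ∂_c ( Σ_b ∂_b E_{db} ) for every index a. In particular, the evolution equations propagate the constraint equations: the divergence constraints are preserved in form under time evolution. -/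
abbrev Sm (f : ℝ × (Fin 3 → ℝ) → ℝ) : Prop := ContDiff ℝ (⊤ : ℕ∞) f

lemma Sm.diff {f : ℝ × (Fin 3 → ℝ) → ℝ} (hf : Sm f) : Differentiable ℝ f :=
  ContDiff.differentiable hf (by simp)

lemma pt_eq {f : ℝ × (Fin 3 → ℝ) → ℝ} (hf : Sm f) :
    pt f = fun p => fderiv ℝ f p (1, 0) := by
  funext p
  have h1 : HasDerivAt (fun s : ℝ => (s, p.2)) ((1 : ℝ), (0 : Fin 3 → ℝ)) p.1 :=
    (hasDerivAt_id p.1).prodMk (hasDerivAt_const p.1 p.2)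
  have h2 : HasFDerivAt f (fderiv ℝ f p) (p.1, p.2) := (hf.diff p).hasFDerivAt
  exact (h2.comp_hasDerivAt p.1 h1).deriv

lemma ps_eq (i : Fin 3) {f : ℝ × (Fin 3 → ℝ) → ℝ} (hf : Sm f) :
    ps i f = fun p => fderiv ℝ f p (0, Pi.single i 1) := by
  funext p
  have h1 : HasDerivAt (fun s : ℝ => (p.1, Function.update p.2 i s))
      ((0 : ℝ), (Pi.single i 1 : Fin 3 → ℝ)) (p.2 i) :=
    (hasDerivAt_const (p.2 i) p.1).prodMk (hasDerivAt_update p.2 i (p.2 i))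
  have h2 : HasFDerivAt f (fderiv ℝ f p) (p.1, Function.update p.2 i (p.2 i)) := by
    rw [Function.update_eq_self]; exact (hf.diff p).hasFDerivAt
  exact (h2.comp_hasDerivAt (p.2 i) h1).deriv

lemma sm_dir {f : ℝ × (Fin 3 → ℝ) → ℝ} (hf : Sm f) (v : ℝ × (Fin 3 → ℝ)) :
    Sm (fun p => fderiv ℝ f p v) :=
  ContDiff.clm_apply (ContDiff.fderiv_right hf (by simp)) contDiff_const

lemma sm_ps (i : Fin 3) {f : ℝ × (Fin 3 → ℝ) → ℝ} (hf : Sm f) : Sm (ps i f) := by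
  rw [ps_eq i hf]; exact sm_dir hf _

lemma sm_pt {f : ℝ × (Fin 3 → ℝ) → ℝ} (hf : Sm f) : Sm (pt f) := by
  rw [pt_eq hf]; exact sm_dir hf _

lemma two_le_top : (2 : WithTop ℕ∞) ≤ ((⊤ : ℕ∞) : WithTop ℕ∞) :=
  WithTop.coe_le_coe.2 (le_top : (2 : ℕ∞) ≤ ⊤)

lemma two_le_top' : (1 + 1 : WithTop ℕ∞) ≤ ((⊤ : ℕ∞) : WithTop ℕ∞) := by
  rw [one_add_one_eq_two]; exact two_le_top

lemma dir_comm {f : ℝ × (Fin 3 → ℝ) → ℝ} (hf : Sm f) (v w p : ℝ × (Fin 3 → ℝ)) :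
    fderiv ℝ (fun q => fderiv ℝ f q v) p w = fderiv ℝ (fun q => fderiv ℝ f q w) p v := by
  have hd : DifferentiableAt ℝ (fderiv ℝ f) p :=
    (ContDiff.differentiable (ContDiff.fderiv_right (m := 1) hf two_le_top') (by simp)) p
  have hs : IsSymmSndFDerivAt ℝ f p :=
    (ContDiff.contDiffAt hf).isSymmSndFDerivAt (by simpa using two_le_top)
  rw [fderiv_clm_apply hd (differentiableAt_const v), fderiv_clm_apply hd (differentiableAt_const w)]
  simpa using hs w v

lemma ps_comm (i j : Fin 3) {f : ℝ × (Fin 3 → ℝ) → ℝ} (hf : Sm f) (p) :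
    ps i (ps j f) p = ps j (ps i f) p := by
  rw [ps_eq i (sm_ps j hf), ps_eq j (sm_ps i hf), ps_eq i hf, ps_eq j hf]
  exact dir_comm hf _ _ p

lemma pt_ps (i : Fin 3) {f : ℝ × (Fin 3 → ℝ) → ℝ} (hf : Sm f) (p) :
    pt (ps i f) p = ps i (pt f) p := by
  rw [pt_eq (sm_ps i hf), ps_eq i (sm_pt hf), ps_eq i hf, pt_eq hf]
  exact dir_comm hf _ _ p

lemma sm_sum {f : Fin 3 → ℝ × (Fin 3 → ℝ) → ℝ} (hf : ∀ b, Sm (f b)) :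
    Sm (fun q => ∑ b, f b q) := ContDiff.sum fun b _ => hf b

lemma sm_mul (k : ℝ) {f : ℝ × (Fin 3 → ℝ) → ℝ} (hf : Sm f) : Sm (fun q => k * f q) :=
  contDiff_const.mul hf

lemma sm_add {f g : ℝ × (Fin 3 → ℝ) → ℝ} (hf : Sm f) (hg : Sm g) : Sm (fun q => f q + g q) :=
  ContDiff.add hf hg

lemma pt_sum {f : Fin 3 → ℝ × (Fin 3 → ℝ) → ℝ} (hf : ∀ b, Sm (f b)) (p) :
    pt (fun q => ∑ b, f b q) p = ∑ b, pt (f b) p := by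
  rw [pt_eq (sm_sum hf)]
  simp only [pt_eq (hf _)]
  rw [fderiv_fun_sum (fun b _ => (hf b).diff p)]
  simp

lemma ps_sum (i : Fin 3) {f : Fin 3 → ℝ × (Fin 3 → ℝ) → ℝ} (hf : ∀ b, Sm (f b)) (p) :
    ps i (fun q => ∑ b, f b q) p = ∑ b, ps i (f b) p := by
  rw [ps_eq i (sm_sum hf)]
  simp only [ps_eq i (hf _)]
  rw [fderiv_fun_sum (fun b _ => (hf b).diff p)]
  simp

lemma ps_mul (i : Fin 3) (k : ℝ) {f : ℝ × (Fin 3 → ℝ) → ℝ} (hf : Sm f) (p) :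
    ps i (fun q => k * f q) p = k * ps i f p := by
  rw [ps_eq i (sm_mul k hf), ps_eq i hf]
  simp only []
  rw [fderiv_const_mul (hf.diff p)]
  simp

lemma ps_add (i : Fin 3) {f g : ℝ × (Fin 3 → ℝ) → ℝ} (hf : Sm f) (hg : Sm g) (p) :
    ps i (fun q => f q + g q) p = ps i f p + ps i g p := by
  rw [ps_eq i (sm_add hf hg), ps_eq i hf, ps_eq i hg]
  simp only []
  rw [fderiv_fun_add (hf.diff p) (hg.diff p)]
  simp

lemma key (S T : ℝ × (Fin 3 → ℝ) → Matrix (Fin 3) (Fin 3) ℝ) (k : ℝ)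
    (hS : ∀ a b, Sm (fun p => S p a b)) (hT : ∀ a b, Sm (fun p => T p a b))
    (hdot : ∀ p a b, pt (fun q => S q a b) p = k * curlT T p a b) (a : Fin 3)
    (p : ℝ × (Fin 3 → ℝ)) :
    pt (fun q => ∑ b, ps b (fun q' => S q' a b) q) p =
        k * ((1 / 2) * ∑ c, ∑ d,
          eps a c d * ps c (fun q => ∑ b, ps b (fun q' => T q' d b) q) p) := by
  have hps : ∀ c d b, Sm (fun q => ps c (fun q' => T q' d b) q) := fun c d b => sm_ps c (hT d b)
  have hin : ∀ b c d, Sm (fun q => eps a c d * ps c (fun q' => T q' d b) q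
      + eps b c d * ps c (fun q' => T q' d a) q) := fun b c d =>
    sm_add (sm_mul _ (hps c d b)) (sm_mul _ (hps c d a))
  have h1 : ∀ b, pt (fun q => ps b (fun q' => S q' a b) q) p
      = k * ((1 / 2) * ∑ c, ∑ d, (eps a c d * ps b (ps c (fun q' => T q' d b)) p
        + eps b c d * ps b (ps c (fun q' => T q' d a)) p)) := by
    intro b
    have e : pt (fun q => S q a b) = fun q => k * ((1 / 2) * ∑ c, ∑ d,
        (eps a c d * ps c (fun q' => T q' d b) q + eps b c d * ps c (fun q' => T q' d a) q)) := by
      funext q; rw [hdot]; rfl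
    refine (pt_ps b (hS a b) p).trans ?_
    rw [e, ps_mul b k (sm_mul _ (sm_sum fun c => sm_sum fun d => hin b c d)),
      ps_mul b _ (sm_sum fun c => sm_sum fun d => hin b c d),
      ps_sum b (fun c => sm_sum fun d => hin b c d)]
    congr 2
    refine Finset.sum_congr rfl fun c _ => ?_
    rw [ps_sum b (fun d => hin b c d)]
    refine Finset.sum_congr rfl fun d _ => ?_
    rw [ps_add b (sm_mul _ (hps c d b)) (sm_mul _ (hps c d a)), ps_mul b _ (hps c d b),
      ps_mul b _ (hps c d a)]
  have h2 : ∀ c d, ps c (fun q => ∑ b, ps b (fun q' => T q' d b) q) p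
      = ∑ b, ps b (ps c (fun q' => T q' d b)) p := by
    intro c d
    rw [ps_sum c (fun b => hps b d b)]
    exact Finset.sum_congr rfl fun b _ => ps_comm c b (hT d b) p
  rw [pt_sum (fun b => sm_ps b (hS a b))]
  simp only [h2]
  rw [Finset.sum_congr rfl fun b _ => h1 b]
  have c10 := fun d => ps_comm 1 0 (hT d a) p
  have c20 := fun d => ps_comm 2 0 (hT d a) p
  have c21 := fun d => ps_comm 2 1 (hT d a) p
  have z : ∑ b, ∑ c, ∑ d, eps b c d * ps b (ps c (fun q' => T q' d a)) p = 0 := by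
    simp only [Fin.sum_univ_three, c10, c20, c21]
    simp only [eps]
    norm_num
    try ring
  simp only [← Finset.mul_sum, Finset.sum_add_distrib]
  rw [z, add_zero, Finset.sum_comm]
  congr 2
  refine Finset.sum_congr rfl fun c _ => ?_
  rw [Finset.sum_comm]
  simp only [Finset.mul_sum]

/-- Propagation of the divergence constraints: for smooth symmetric `E, H` with
`∂ₜE = curl H` and `∂ₜH = −curl E`, the spatial divergences obey the coupled
first-order system
`∂ₜ(div E)_a = ½ Σ_{c,d} ε_{acd} ∂_c (div H)_d` and
`∂ₜ(div H)_a = −½ Σ_{c,d} ε_{acd} ∂_c (div E)_d`. -/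
theorem divergence_constraints_propagate
    (E H : ℝ × (Fin 3 → ℝ) → Matrix (Fin 3) (Fin 3) ℝ)
    (hEsmooth : ∀ a b, ContDiff ℝ (⊤ : ℕ∞) (fun p => E p a b))
    (hHsmooth : ∀ a b, ContDiff ℝ (⊤ : ℕ∞) (fun p => H p a b))
    (hEsymm : ∀ p a b, E p a b = E p b a)
    (hHsymm : ∀ p a b, H p a b = H p b a)
    (hdotE : ∀ p a b, pt (fun q => E q a b) p = curlT H p a b)
    (hdotH : ∀ p a b, pt (fun q => H q a b) p = - curlT E p a b) :
    ∀ a p,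
      pt (fun q => ∑ b, ps b (fun q' => E q' a b) q) p =
        (1 / 2) * ∑ c, ∑ d,
          eps a c d * ps c (fun q => ∑ b, ps b (fun q' => H q' d b) q) p ∧
      pt (fun q => ∑ b, ps b (fun q' => H q' a b) q) p =
        -((1 / 2) * ∑ c, ∑ d,
          eps a c d * ps c (fun q => ∑ b, ps b (fun q' => E q' d b) q) p) := by
  intro a p
  constructor
  · simpa only [one_mul] using
      key E H 1 hEsmooth hHsmooth (fun p a b => by rw [hdotE, one_mul]) a p
  · simpa only [neg_one_mul] using
      key H E (-1) hHsmooth hEsmooth (fun p a b => by rw [hdotH, neg_one_mul]) a p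
end
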